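/- A function u : X → [-∞, ∞) is S-subharmonic on X if and only if there exists a sequence (u_j) of functions in S that decreases pointwise to u on X. -/

import Mathlib

open MeasureTheory Topology Filter
open scoped ENNReal

/-- The nonnegative part of an extended real number, as an element of `ℝ≥0∞`. -/
noncomputable def erealToENNReal (a : EReal) : ℝ≥0∞ :=
  if a = ⊤ then ⊤ else ENNReal.ofReal a.toReal

/-- The (upper) integral of a function with values in `[-∞, ∞]`, defined as the
difference of the lower integrals of its positive and negative parts. -/
noncomputable def erealIntegral {α : Type*} [MeasurableSpace α]
    (μ : Measure α) (u : α → EReal) : EReal :=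
  ((∫⁻ x, erealToENNReal (u x) ∂μ : ℝ≥0∞) : EReal) -
    ((∫⁻ x, erealToENNReal (-(u x)) ∂μ : ℝ≥0∞) : EReal)

/-- `μ` is a Jensen measure with barycenter `z` with respect to the family `S` of
(continuous real-valued) functions: a Borel probability measure such that
`u z ≤ ∫ u dμ` for every `u ∈ S`. -/
def IsJensenMeasure {α : Type*} [MeasurableSpace α]
    (S : Set (α → ℝ)) (z : α) (μ : Measure α) : Prop :=
  IsProbabilityMeasure μ ∧ ∀ u ∈ S, u z ≤ ∫ x, u x ∂μ

/-- A function `u : α → [-∞, ∞)` is `S`-subharmonic if it is upper semicontinuous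
and satisfies `u z ≤ ∫ u dμ` for every `z` and every Jensen measure `μ` with
barycenter `z` w.r.t. `S`. -/
def IsSSubharmonic {α : Type*} [TopologicalSpace α] [MeasurableSpace α]
    (S : Set (α → ℝ)) (u : α → EReal) : Prop :=
  UpperSemicontinuous u ∧ (∀ x, u x ≠ ⊤) ∧
    ∀ z : α, ∀ μ : Measure α, IsJensenMeasure S z μ → u z ≤ erealIntegral μ u

/-!
Decreasing limits of functions of `S` are `S`-subharmonic by monotone convergence.

Conversely, let `u` be `S`-subharmonic and `u < φ` with `φ` continuous. If every `v ∈ S` with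
`v ≤ φ` satisfied `v z ≤ c`, then no element of the cone generated by `c - φ` and the `v ∈ S` with
`v z = 0` would be everywhere negative; separating this cone from the negative functions, the Riesz
representation theorem would yield a Jensen measure `μ` at `z` with `∫ φ dμ ≤ c`. For `c = u z` this
contradicts `u z ≤ ∫ u dμ < ∫ φ dμ`. So every `z` admits `v ∈ S` with `v ≤ φ` and `u z < v z`, and
since `S` is stable under maxima, compactness gives one `v ∈ S` with `u < v ≤ φ` everywhere.

Hence the functions of `S` strictly above `u` form a downward directed family with infimum `u`. As
every subspace is Lindelöf, a countable subfamily has the same infimum, and directedness turns it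
into a decreasing sequence.
-/

/-! ### The extended-real integral -/

section ERealIntegral

variable {α : Type*} [MeasurableSpace α] {μ : Measure α}

theorem erealToENNReal_eq_toENNReal (a : EReal) : erealToENNReal a = a.toENNReal := rfl

theorem erealIntegral_mono {u v : α → EReal} (huv : u ≤ v) :
    erealIntegral μ u ≤ erealIntegral μ v := by
  simp only [erealIntegral, erealToENNReal_eq_toENNReal]
  refine EReal.sub_le_sub ?_ ?_
  · exact EReal.coe_ennreal_le_coe_ennreal_iff.2
      (lintegral_mono fun x => EReal.toENNReal_le_toENNReal (huv x))
  · exact EReal.coe_ennreal_le_coe_ennreal_iff.2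
      (lintegral_mono fun x => EReal.toENNReal_le_toENNReal (EReal.neg_le_neg_iff.2 (huv x)))

theorem erealIntegral_coe {f : α → ℝ} (hf : Integrable f μ) :
    erealIntegral μ (fun x => (f x : EReal)) = ((∫ x, f x ∂μ : ℝ) : EReal) := by
  have hpos : ∫⁻ x, ENNReal.ofReal (f x) ∂μ ≠ ⊤ := hf.lintegral_lt_top.ne
  have hneg : ∫⁻ x, ENNReal.ofReal (-f x) ∂μ ≠ ⊤ := hf.neg.lintegral_lt_top.ne
  rw [integral_eq_lintegral_pos_part_sub_lintegral_neg_part hf, EReal.coe_sub,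
    EReal.coe_ennreal_toReal hpos, EReal.coe_ennreal_toReal hneg]
  simp only [erealIntegral, erealToENNReal_eq_toENNReal, ← EReal.coe_neg,
    EReal.real_coe_toENNReal]

theorem tendsto_erealIntegral_of_antitone {f : ℕ → α → EReal} {u : α → EReal}
    (hf : ∀ j, Measurable (f j)) (hfin : ∫⁻ x, (f 0 x).toENNReal ∂μ ≠ ⊤) (hanti : Antitone f)
    (hlim : ∀ x, Tendsto (fun j => f j x) atTop (𝓝 (u x))) :
    Tendsto (fun j => erealIntegral μ (f j)) atTop (𝓝 (erealIntegral μ u)) := by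
  have hcont : Continuous EReal.toENNReal := by fun_prop
  have hu : u ≤ f 0 := fun x => Antitone.le_of_tendsto (fun _ _ h => hanti h x) (hlim x) 0
  have hpos : Tendsto (fun j => ∫⁻ x, (f j x).toENNReal ∂μ) atTop
      (𝓝 (∫⁻ x, (u x).toENNReal ∂μ)) :=
    lintegral_tendsto_of_tendsto_of_antitone (fun j => (hf j).ereal_toENNReal.aemeasurable)
      (ae_of_all _ fun x _ _ h => EReal.toENNReal_le_toENNReal (hanti h x)) hfin
      (ae_of_all _ fun x => (hcont.tendsto _).comp (hlim x))
  have hneg : Tendsto (fun j => ∫⁻ x, (-f j x).toENNReal ∂μ) atTop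
      (𝓝 (∫⁻ x, (-u x).toENNReal ∂μ)) :=
    lintegral_tendsto_of_tendsto_of_monotone (fun j => (hf j).neg.ereal_toENNReal.aemeasurable)
      (ae_of_all _ fun x _ _ h =>
        EReal.toENNReal_le_toENNReal (EReal.neg_le_neg_iff.2 (hanti h x)))
      (ae_of_all _ fun x => ((hcont.comp continuous_neg).tendsto _).comp (hlim x))
  have hufin : ∫⁻ x, (u x).toENNReal ∂μ ≠ ⊤ :=
    ne_top_of_le_ne_top hfin (lintegral_mono fun x => EReal.toENNReal_le_toENNReal (hu x))
  -- The positive part of the limit has a finite integral, so the difference is not `⊤ - ⊤`.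
  have hadd := EReal.continuousAt_add (p := (((∫⁻ x, (u x).toENNReal ∂μ : ℝ≥0∞) : EReal),
    -((∫⁻ x, (-u x).toENNReal ∂μ : ℝ≥0∞) : EReal))) (.inl (by simpa using hufin)) (.inl (by simp))
  simp only [erealIntegral, erealToENNReal_eq_toENNReal, sub_eq_add_neg]
  exact hadd.tendsto.comp (((continuous_coe_ennreal_ereal.tendsto _).comp hpos).prodMk_nhds
    (((continuous_neg.comp continuous_coe_ennreal_ereal).tendsto _).comp hneg))

end ERealIntegral

/-! ### Upper semicontinuous functions on compact spaces -/

section UpperSemicontinuous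

variable {α : Type*} [TopologicalSpace α] [CompactSpace α] {u : α → EReal}

theorem exists_forall_lt_of_directed {ι : Type*} [Nonempty ι] (hu : UpperSemicontinuous u)
    {f : ι → α → ℝ} (hf : ∀ i, Continuous (f i)) (hdir : Directed (· ≤ ·) f)
    (h : ∀ x, ∃ i, u x < f i x) : ∃ i, ∀ x, u x < f i x := by
  have hopen : ∀ i, IsOpen {x | u x < f i x} := fun i => by
    simpa only [← Set.preimage_compl, Set.compl_ofPred, not_le] using!
      hu.IsClosed_hypograph.isOpen_compl.preimage
        (continuous_id.prodMk (continuous_coe_real_ereal.comp (hf i)))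
  have hmono : ∀ i j, f i ≤ f j → {x | u x < f i x} ⊆ {x | u x < f j x} :=
    fun i j hij x hx => lt_of_lt_of_le hx (EReal.coe_le_coe_iff.2 (hij x))
  obtain ⟨i, hi⟩ := isCompact_univ.elim_directed_cover _ hopen
    (fun x _ => Set.mem_iUnion.2 (h x)) (hdir.mono_comp _ hmono)
  exact ⟨i, fun x => hi (Set.mem_univ x)⟩

theorem exists_forall_lt_const (hu : UpperSemicontinuous u) (htop : ∀ x, u x ≠ ⊤) :
    ∃ M : ℝ, ∀ x, u x < M := by
  refine exists_forall_lt_of_directed (f := fun (M : ℝ) _ => M) hu (fun _ => continuous_const)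
    (Monotone.directed_le fun _ _ h _ => h) fun x => ?_
  obtain ⟨M, hM, -⟩ := EReal.lt_iff_exists_real_btwn.1 (htop x).lt_top
  exact ⟨M, hM⟩

theorem exists_pos_forall_lt_sub (hu : UpperSemicontinuous u) {φ : α → ℝ} (hφ : Continuous φ)
    (huφ : ∀ x, u x < φ x) : ∃ ε > 0, ∀ x, u x < (φ x - ε : ℝ) := by
  have hdir : Directed (· ≤ ·) fun (ε : Set.Ioi (0 : ℝ)) x => φ x - ε := fun ε δ =>
    ⟨ε ⊓ δ, fun x => sub_le_sub_left (min_le_left ε.1 δ.1) _,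
      fun x => sub_le_sub_left (min_le_right ε.1 δ.1) _⟩
  obtain ⟨ε, hε⟩ := exists_forall_lt_of_directed hu (fun ε => hφ.sub continuous_const) hdir
    fun x => by
      obtain ⟨r, hur, hrφ⟩ := EReal.lt_iff_exists_real_btwn.1 (huφ x)
      exact ⟨⟨φ x - r, sub_pos.2 (EReal.coe_lt_coe_iff.1 hrφ)⟩, by simpa using hur⟩
  exact ⟨ε, ε.2, hε⟩

theorem erealIntegral_lt_integral [MeasurableSpace α] [OpensMeasurableSpace α] {μ : Measure α}
    [IsProbabilityMeasure μ] (hu : UpperSemicontinuous u) {φ : α → ℝ} (hφ : Continuous φ)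
    (huφ : ∀ x, u x < φ x) : erealIntegral μ u < ((∫ x, φ x ∂μ : ℝ) : EReal) := by
  obtain ⟨ε, hε, huε⟩ := exists_pos_forall_lt_sub hu hφ huφ
  have hint : Integrable φ μ := hφ.integrable_of_hasCompactSupport (.of_compactSpace φ)
  calc erealIntegral μ u
      ≤ erealIntegral μ fun x => ((φ x - ε : ℝ) : EReal) := erealIntegral_mono fun x => (huε x).le
    _ = ((∫ x, φ x ∂μ - ε : ℝ) : EReal) := by
        rw [erealIntegral_coe (f := fun x => φ x - ε) (hint.sub (integrable_const ε)),
          integral_sub hint (integrable_const ε), integral_const, probReal_univ, one_smul]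
    _ < ((∫ x, φ x ∂μ : ℝ) : EReal) := EReal.coe_lt_coe_iff.2 (sub_lt_self _ hε)

theorem exists_continuousMap_forall_lt_apply_eq [T2Space α] (hu : UpperSemicontinuous u)
    (htop : ∀ x, u x ≠ ⊤) {z : α} {r : ℝ} (hr : u z < r) :
    ∃ φ : C(α, ℝ), (∀ x, u x < φ x) ∧ φ z = r := by
  obtain ⟨M, hM⟩ := exists_forall_lt_const hu htop
  obtain ⟨φ, hφz, hφM, hφ⟩ := exists_bounded_mem_Icc_of_closed_of_le (isClosed_singleton (x := z))
    (hu.isOpen_preimage r).isClosed_compl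
    (Set.disjoint_singleton_left.2 (by simpa using hr)) (le_max_left r M)
  refine ⟨φ, fun x => ?_, hφz rfl⟩
  by_cases hx : u x < r
  · exact hx.trans_le (EReal.coe_le_coe_iff.2 (hφ x).1)
  · have hφx : φ x = max r M := hφM (by simpa using hx)
    exact (hM x).trans_le (EReal.coe_le_coe_iff.2 ((le_max_right r M).trans_eq hφx.symm))

end UpperSemicontinuous

/-! ### Edwards' duality theorem -/

section Duality

variable {α : Type*} [TopologicalSpace α] [CompactSpace α]

theorem exists_positiveLinearMap_forall_mem_nonneg (T : PointedCone ℝ C(α, ℝ))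
    (hT : ∀ f ∈ T, ∃ x, 0 ≤ f x) :
    ∃ L : C(α, ℝ) →ₚ[ℝ] ℝ, L 1 = 1 ∧ ∀ f ∈ T, 0 ≤ L f := by
  let P := PointedCone.positive ℝ C(α, ℝ)
  have hopen : IsOpen {f : C(α, ℝ) | ∀ x, f x < 0} := by
    simpa only [Set.MapsTo, Set.mem_univ, true_imp_iff, Set.mem_Iio] using
      ContinuousMap.isOpen_setOfPred_mapsTo (X := α) isCompact_univ (isOpen_Iio (a := (0 : ℝ)))
  have hdisj : Disjoint {f : C(α, ℝ) | ∀ x, f x < 0} (T ⊔ P : PointedCone ℝ C(α, ℝ)) := by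
    refine Set.disjoint_left.2 fun f hneg hf => ?_
    obtain ⟨g, hg, p, hp, rfl⟩ := Submodule.mem_sup.1 hf
    obtain ⟨x, hx⟩ := hT g hg
    exact (hneg x).not_ge (add_nonneg hx (hp x))
  have hneg_one : (-1 : C(α, ℝ)) ∉ Submodule.closure (T ⊔ P) := fun h =>
    Set.disjoint_left.1 (hdisj.closure_right hopen) (fun _ => neg_one_lt_zero) h
  obtain ⟨F, hF, hF1⟩ := ProperCone.hyperplane_separation_point _ hneg_one
  have hF_nonneg : ∀ f ∈ T ⊔ P, 0 ≤ F f := fun f hf => hF f (subset_closure hf)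
  have hF_one : 0 < F 1 := by simpa using hF1
  have hF_pos : ∀ f, 0 ≤ f → 0 ≤ ((F 1)⁻¹ • (F : C(α, ℝ) →ₗ[ℝ] ℝ)) f := fun f hf =>
    mul_nonneg (inv_nonneg.2 hF_one.le) (hF_nonneg f (Submodule.mem_sup_right hf))
  exact ⟨.mk₀ _ hF_pos, inv_mul_cancel₀ hF_one.ne', fun f hf =>
    mul_nonneg (inv_nonneg.2 hF_one.le) (hF_nonneg f (Submodule.mem_sup_left hf))⟩

variable [T2Space α] [MeasurableSpace α] [BorelSpace α]

theorem exists_isProbabilityMeasure_integral_eq (L : C(α, ℝ) →ₚ[ℝ] ℝ) (hL : L 1 = 1) :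
    ∃ μ : Measure α, IsProbabilityMeasure μ ∧ ∀ f : C(α, ℝ), ∫ x, f x ∂μ = L f := by
  let Λ : CompactlySupportedContinuousMap α ℝ →ₚ[ℝ] ℝ :=
    .mk₀
      { toFun := fun f => L f.toContinuousMap
        map_add' := fun f g => map_add L f.toContinuousMap g.toContinuousMap
        map_smul' := fun t f => map_smul L t f.toContinuousMap }
      fun _ hf => map_nonneg L hf
  have hΛ : ∀ f : C(α, ℝ), ∫ x, f x ∂(RealRMK.rieszMeasure Λ) = L f := fun f =>
    RealRMK.integral_rieszMeasure Λ (CompactlySupportedContinuousMap.continuousMapEquiv f)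
  refine ⟨RealRMK.rieszMeasure Λ, ⟨?_⟩, hΛ⟩
  have hreal : (RealRMK.rieszMeasure Λ).real Set.univ = 1 := by
    simpa [hL] using hΛ 1
  exact (ENNReal.toReal_eq_one_iff _).1 hreal

theorem exists_isProbabilityMeasure_forall_integral_nonneg (T : PointedCone ℝ C(α, ℝ))
    (hT : ∀ f ∈ T, ∃ x, 0 ≤ f x) :
    ∃ μ : Measure α, IsProbabilityMeasure μ ∧ ∀ f ∈ T, 0 ≤ ∫ x, f x ∂μ := by
  obtain ⟨L, hL, hLT⟩ := exists_positiveLinearMap_forall_mem_nonneg T hT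
  obtain ⟨μ, hμ, hμL⟩ := exists_isProbabilityMeasure_integral_eq L hL
  exact ⟨μ, hμ, fun f hf => (hLT f hf).trans_eq (hμL f).symm⟩

end Duality

section Cone

variable {α : Type*} [TopologicalSpace α] [CompactSpace α] {S : PointedCone ℝ (α → ℝ)}
  (hcont : ∀ v ∈ S, Continuous v) (hconst : ∀ c : ℝ, (fun _ => c) ∈ S)

include hcont hconst

theorem exists_nonneg_add_mul_sub {φ : C(α, ℝ)} {z : α} {c : ℝ}
    (h : ∀ v ∈ S, v ≤ φ → v z ≤ c) {v : α → ℝ} (hv : v ∈ S) (hvz : v z = 0) {t : ℝ}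
    (ht : 0 ≤ t) : ∃ x, 0 ≤ v x + t * (c - φ x) := by
  by_contra! hneg
  obtain rfl | ht := ht.eq_or_lt
  · simpa [hvz] using hneg z
  have hv_cont := hcont v hv
  obtain ⟨δ, hδ, hle⟩ := isCompact_univ.exists_forall_le'
    (f := fun x => -(v x + t * (c - φ x))) (by fun_prop) (a := 0)
    fun x _ => neg_pos.2 (hneg x)
  have hmem : t⁻¹ • (v + fun _ => δ) + (fun _ => c) ∈ S :=
    S.add_mem (S.smul_mem (inv_nonneg.2 ht.le) (S.add_mem hv (hconst δ))) (hconst c)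
  have hbelow : t⁻¹ • (v + fun _ => δ) + (fun _ => c) ≤ ⇑φ := fun x => by
    have hx : v x + δ ≤ t * (φ x - c) := by linarith [hle x (Set.mem_univ x)]
    have hdiv : t⁻¹ * (v x + δ) ≤ φ x - c := (inv_mul_le_iff₀ ht).2 hx
    exact le_sub_iff_add_le.1 hdiv
  have hz : t⁻¹ * (v z + δ) + c ≤ c := h _ hmem hbelow
  have hpos : 0 < t⁻¹ * δ := mul_pos (inv_pos.2 ht) hδ
  rw [hvz, zero_add] at hz
  linarith

variable [T2Space α] [MeasurableSpace α] [BorelSpace α]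

theorem exists_isJensenMeasure_integral_le {φ : C(α, ℝ)} {z : α} {c : ℝ}
    (h : ∀ v ∈ S, v ≤ φ → v z ≤ c) :
    ∃ μ : Measure α, IsJensenMeasure (S : Set (α → ℝ)) z μ ∧ ∫ x, φ x ∂μ ≤ c := by
  let S₀ : PointedCone ℝ C(α, ℝ) :=
    (S ⊓ .ofSubmodule (LinearMap.ker (LinearMap.proj z))).comap (ContinuousMap.coeFnLinearMap ℝ)
  let ψ : C(α, ℝ) := .const α c - φ
  have hnonneg : ∀ f ∈ S₀ ⊔ .hull ℝ {ψ}, ∃ x, 0 ≤ f x := fun f hf => by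
    obtain ⟨v, ⟨hv, hvz⟩, w, hw, rfl⟩ := Submodule.mem_sup.1 hf
    obtain ⟨t, rfl⟩ := Submodule.mem_span_singleton.1 hw
    exact exists_nonneg_add_mul_sub hcont hconst h hv hvz t.2
  obtain ⟨μ, hμ, hint⟩ := exists_isProbabilityMeasure_forall_integral_nonneg _ hnonneg
  have integrable {f : α → ℝ} (hf : Continuous f) : Integrable f μ :=
    hf.integrable_of_hasCompactSupport (.of_compactSpace f)
  refine ⟨μ, ⟨hμ, fun v hv => ?_⟩, ?_⟩
  · have hmem : (⟨v, hcont v hv⟩ - .const α (v z) : C(α, ℝ)) ∈ S₀ := by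
      refine ⟨?_, sub_self (v z)⟩
      simpa only [sub_eq_add_neg] using! S.add_mem hv (hconst (-v z))
    have hnn : 0 ≤ ∫ x, (v x - v z) ∂μ := hint _ (Submodule.mem_sup_left hmem)
    rwa [integral_sub (integrable (hcont v hv)) (integrable_const _), integral_const,
      probReal_univ, one_smul, sub_nonneg] at hnn
  · have hnn : 0 ≤ ∫ x, (c - φ x) ∂μ :=
      hint ψ (Submodule.mem_sup_right (Submodule.mem_span_singleton_self ψ))
    rwa [integral_sub (integrable_const _) (integrable φ.continuous), integral_const,
      probReal_univ, one_smul, sub_nonneg] at hnn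

/-- The functions of `S` that exceed `u` at every point, as approximants of `u` from above. The
inequality is strict because compactness then leaves room for a further function of `S` between `u`
and the minimum of two of them, which makes the family directed. -/
def strictMajorants (S : Set (α → ℝ)) (u : α → EReal) : Set (α → ℝ) :=
  {v ∈ S | ∀ x, u x < v x}

theorem exists_mem_lt_apply_of_isSSubharmonic {u : α → EReal}
    (hu : IsSSubharmonic (S : Set (α → ℝ)) u) {φ : C(α, ℝ)} (huφ : ∀ x, u x < φ x) (z : α) :
    ∃ v ∈ S, v ≤ φ ∧ u z < v z := by
  obtain ⟨husc, htop, hmean⟩ := hu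
  by_contra! hle
  obtain hz | hz := eq_or_ne (u z) ⊥
  · have hbelow : (fun _ => -‖φ‖) ≤ ⇑φ := φ.neg_norm_le_apply
    exact (hle _ (hconst _) hbelow).not_gt (hz ▸ EReal.bot_lt_coe _)
  lift u z to ℝ using ⟨htop z, hz⟩ with c hc
  obtain ⟨μ, hμ, hφc⟩ := exists_isJensenMeasure_integral_le hcont hconst fun v hv hvφ =>
    EReal.coe_le_coe_iff.1 (hle v hv hvφ)
  have := hμ.1
  have hlt : (c : EReal) < ((∫ x, φ x ∂μ : ℝ) : EReal) :=
    hc.trans_lt <| (hmean z μ hμ).trans_lt (erealIntegral_lt_integral husc φ.continuous huφ)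
  exact hlt.not_ge (EReal.coe_le_coe_iff.2 hφc)

variable (hsup : SupClosed (S : Set (α → ℝ)))

include hsup

theorem exists_mem_strictMajorants_le {u : α → EReal} (hu : IsSSubharmonic (S : Set (α → ℝ)) u)
    {φ : C(α, ℝ)} (huφ : ∀ x, u x < φ x) : ∃ v ∈ strictMajorants (S : Set (α → ℝ)) u, v ≤ φ := by
  have hpt := exists_mem_lt_apply_of_isSSubharmonic hcont hconst hu huφ
  have : Nonempty {v // v ∈ S ∧ v ≤ ⇑φ} := ⟨fun _ => -‖φ‖, hconst _, φ.neg_norm_le_apply⟩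
  have hdir : Directed (· ≤ ·) (Subtype.val : {v // v ∈ S ∧ v ≤ ⇑φ} → α → ℝ) := fun v w =>
    ⟨⟨v.1 ⊔ w.1, hsup v.2.1 w.2.1, sup_le v.2.2 w.2.2⟩, le_sup_left, le_sup_right⟩
  obtain ⟨v, huv⟩ := exists_forall_lt_of_directed hu.1 (fun v => hcont _ v.2.1) hdir fun z => by
    obtain ⟨v, hv, hvφ, huv⟩ := hpt z
    exact ⟨⟨v, hv, hvφ⟩, huv⟩
  exact ⟨v, ⟨v.2.1, huv⟩, v.2.2⟩

theorem directedOn_strictMajorants {u : α → EReal} (hu : IsSSubharmonic (S : Set (α → ℝ)) u) :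
    DirectedOn (· ≥ ·) (strictMajorants (S : Set (α → ℝ)) u) := by
  rintro v ⟨hv, huv⟩ w ⟨hw, huw⟩
  let φ : C(α, ℝ) := ⟨v, hcont v hv⟩ ⊓ ⟨w, hcont w hw⟩
  obtain ⟨g, hg, hgφ⟩ := exists_mem_strictMajorants_le hcont hconst hsup hu (φ := φ) fun x =>
    (lt_min (huv x) (huw x)).trans_eq (EReal.coe_strictMono.monotone.map_min).symm
  exact ⟨g, hg, fun x => (hgφ x).trans (min_le_left _ _),
    fun x => (hgφ x).trans (min_le_right _ _)⟩

theorem isGLB_strictMajorants {u : α → EReal} (hu : IsSSubharmonic (S : Set (α → ℝ)) u) :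
    IsGLB ((fun v x => (v x : EReal)) '' strictMajorants (S : Set (α → ℝ)) u) u := by
  refine ⟨?_, fun w hw z => le_of_forall_gt_imp_ge_of_dense fun a ha => ?_⟩
  · rintro _ ⟨v, hv, rfl⟩ x
    exact (hv.2 x).le
  obtain ⟨r, hur, hra⟩ := EReal.lt_iff_exists_real_btwn.1 ha
  obtain ⟨φ, huφ, hφz⟩ := exists_continuousMap_forall_lt_apply_eq hu.1 hu.2.1 hur
  obtain ⟨v, hv, hvφ⟩ := exists_mem_strictMajorants_le hcont hconst hsup hu huφ
  calc w z ≤ v z := hw (Set.mem_image_of_mem _ hv) z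
    _ ≤ r := EReal.coe_le_coe_iff.2 ((hvφ z).trans_eq hφz)
    _ ≤ a := hra.le

end Cone

/-! ### Decreasing sequences -/

theorem exists_antitone_nat_forall_mem_exists_le {P : Type*} [Preorder P] {A C : Set P}
    (hA : DirectedOn (· ≥ ·) A) (hne : A.Nonempty) (hCA : C ⊆ A) (hC : C.Countable) :
    ∃ f : ℕ → P, (∀ n, f n ∈ A) ∧ Antitone f ∧ ∀ c ∈ C, ∃ n, f n ≤ c := by
  have := hC.toEncodable
  let below (c : C) : Order.Cofinal Aᵒᵈ :=
    { carrier := {a | (OrderDual.ofDual a).1 ≤ c}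
      isCofinal := fun a => by
        obtain ⟨b, hb, hba, hbc⟩ := hA _ (OrderDual.ofDual a).2 _ (hCA c.2)
        exact ⟨OrderDual.toDual ⟨b, hb⟩, hbc, hba⟩ }
  let s := Order.sequenceOfCofinals (OrderDual.toDual ⟨hne.some, hne.some_mem⟩) below
  exact ⟨fun n => (OrderDual.ofDual (s n)).1, fun n => (OrderDual.ofDual (s n)).2,
    fun _ _ h => Order.sequenceOfCofinals.monotone _ below h,
    fun c hc => ⟨_, Order.sequenceOfCofinals.encode_mem _ below ⟨c, hc⟩⟩⟩

section Approximation

variable {α : Type*} [TopologicalSpace α] [CompactSpace α] [MeasurableSpace α]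

theorem isSSubharmonic_of_antitone_of_tendsto [OpensMeasurableSpace α] {S : Set (α → ℝ)}
    {u : α → EReal} {f : ℕ → α → ℝ} (hcont : ∀ j, Continuous (f j)) (hmem : ∀ j, f j ∈ S)
    (hanti : ∀ x, Antitone fun j => f j x)
    (hlim : ∀ x, Tendsto (fun j => (f j x : EReal)) atTop (𝓝 (u x))) :
    IsSSubharmonic S u := by
  have hantiE : Antitone fun j x => (f j x : EReal) := fun _ _ h x =>
    EReal.coe_le_coe_iff.2 (hanti x h)
  have hinf : ∀ x, ⨅ j, (f j x : EReal) = u x := fun x =>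
    iInf_eq_of_tendsto (fun _ _ h => hantiE h x) (hlim x)
  have hle : ∀ j x, u x ≤ f j x := fun j x => (hinf x).symm.trans_le (iInf_le _ j)
  have hcontE : ∀ j, Continuous fun x => (f j x : EReal) := fun j =>
    continuous_coe_real_ereal.comp (hcont j)
  refine ⟨?_, fun x => ((hle 0 x).trans_lt (EReal.coe_lt_top _)).ne, fun z μ hμ => ?_⟩
  · simpa only [hinf] using upperSemicontinuous_iInf fun j => (hcontE j).upperSemicontinuous
  have := hμ.1
  have hint : ∀ j, Integrable (f j) μ := fun j =>
    (hcont j).integrable_of_hasCompactSupport (.of_compactSpace _)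
  refine ge_of_tendsto' (tendsto_erealIntegral_of_antitone (fun j => (hcontE j).measurable)
    (hint 0).lintegral_lt_top.ne hantiE hlim) fun j => ?_
  calc u z ≤ f j z := hle j z
    _ ≤ ((∫ x, f j x ∂μ : ℝ) : EReal) := EReal.coe_le_coe_iff.2 (hμ.2 _ (hmem j))
    _ = erealIntegral μ fun x => (f j x : EReal) := (erealIntegral_coe (hint j)).symm

variable [T2Space α] [HereditarilyLindelofSpace α] [BorelSpace α] {S : PointedCone ℝ (α → ℝ)}
  (hcont : ∀ v ∈ S, Continuous v) (hconst : ∀ c : ℝ, (fun _ => c) ∈ S)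
  (hsup : SupClosed (S : Set (α → ℝ)))

include hcont hconst hsup

theorem exists_antitone_tendsto_of_isSSubharmonic {u : α → EReal}
    (hu : IsSSubharmonic (S : Set (α → ℝ)) u) :
    ∃ f : ℕ → α → ℝ, (∀ j, f j ∈ S) ∧ (∀ x, Antitone fun j => f j x) ∧
      ∀ x, Tendsto (fun j => (f j x : EReal)) atTop (𝓝 (u x)) := by
  obtain ⟨M, hM⟩ := exists_forall_lt_const hu.1 hu.2.1
  obtain ⟨_, hsub, hC, hglb⟩ := exists_countable_upperSemicontinuous_isGLB
    (by
      rintro _ ⟨v, hv, rfl⟩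
      exact (continuous_coe_real_ereal.comp (hcont v hv.1)).upperSemicontinuous)
    (isGLB_strictMajorants hcont hconst hsup hu)
  obtain ⟨C, hCsub, hbij⟩ := Set.SurjOn.exists_bijOn_subset hsub
  have hCcount : C.Countable := hbij.mapsTo.countable_of_injOn hbij.injOn hC
  rw [← hbij.image_eq] at hglb
  obtain ⟨f, hf, hanti, hcofinal⟩ := exists_antitone_nat_forall_mem_exists_le
    (directedOn_strictMajorants hcont hconst hsup hu) ⟨fun _ => M, hconst M, hM⟩ hCsub hCcount
  refine ⟨f, fun j => (hf j).1, fun x _ _ h => hanti h x, fun x => ?_⟩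
  refine tendsto_atTop_isGLB (fun _ _ h => EReal.coe_le_coe_iff.2 (hanti h x)) ⟨?_, ?_⟩
  · rintro _ ⟨j, rfl⟩
    exact ((hf j).2 x).le
  · refine fun a ha => (isGLB_pi.1 hglb x).2 ?_
    rintro _ ⟨_, ⟨c, hc, rfl⟩, rfl⟩
    obtain ⟨n, hn⟩ := hcofinal c hc
    exact (ha ⟨n, rfl⟩).trans (EReal.coe_le_coe_iff.2 (hn x))

theorem subharmonic_iff_decreasing_approx_general (u : α → EReal) :
    IsSSubharmonic (S : Set (α → ℝ)) u ↔
      ∃ uj : ℕ → α → ℝ, (∀ j, uj j ∈ S) ∧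
        (∀ x, Antitone fun j => uj j x) ∧
        (∀ x, Tendsto (fun j => ((uj j x : ℝ) : EReal)) atTop (𝓝 (u x))) :=
  ⟨exists_antitone_tendsto_of_isSSubharmonic hcont hconst hsup, fun ⟨_, hmem, hanti, hlim⟩ =>
    isSSubharmonic_of_antitone_of_tendsto (fun j => hcont _ (hmem j)) hmem hanti hlim⟩

end Approximation

/-- A function `u : X → [-∞, ∞)` is `S`-subharmonic on `X` if and only if it is the
pointwise decreasing limit of a sequence of functions in `S`. -/
theorem subharmonic_iff_decreasing_approx {n : ℕ}
    (X : Set (Fin n → ℂ)) (hX : IsCompact X)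
    (S : Set (↥X → ℝ)) (hS : ∀ f ∈ S, Continuous f)
    (hconst : ∀ c : ℝ, (fun _ => c) ∈ S)
    (hadd : ∀ u ∈ S, ∀ v ∈ S, u + v ∈ S)
    (hsmul : ∀ u ∈ S, ∀ t : ℝ, 0 ≤ t → t • u ∈ S)
    (hmax : ∀ u ∈ S, ∀ v ∈ S, (fun x => max (u x) (v x)) ∈ S)
    (u : ↥X → EReal) :
    IsSSubharmonic S u ↔
      ∃ uj : ℕ → ↥X → ℝ, (∀ j, uj j ∈ S) ∧
        (∀ x, Antitone fun j => uj j x) ∧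
        (∀ x, Tendsto (fun j => ((uj j x : ℝ) : EReal)) atTop (𝓝 (u x))) := by
  have : CompactSpace X := isCompact_iff_compactSpace.1 hX
  let cone : PointedCone ℝ (X → ℝ) :=
    { carrier := S
      add_mem' := fun hv hw => hadd _ hv _ hw
      zero_mem' := hconst 0
      smul_mem' := fun t _ hv => hsmul _ hv t t.2 }
  exact subharmonic_iff_decreasing_approx_general (S := cone) hS hconst
    (fun _ hv _ hw => hmax _ hv _ hw) u
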